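/- Let $C_1,\ldots,C_\ell$ be mutually commuting positive semi-definite operators on $\mathcal{K}$ and $A_1,\ldots,A_\ell$ self-adjoint operators on $\mathcal{H}$. Then for every probability distribution $(p_i)_{i=1}^\ell$, $\sum_{i=1}^\ell p_i\, C_i\otimes A_i^{\downarrow} \;\succeq\; \sum_{i=1}^\ell p_i\, C_i\otimes A_i$ in the majorization order on eigenvalue vectors. -/

import Mathlib

open Matrix Kronecker
open scoped ComplexOrder

/-- `Maj x y` : the real vector `x` majorizes `y`. -/
def Maj {ι : Type*} [Fintype ι] (x y : ι → ℝ) : Prop :=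
  (∀ s : Finset ι, ∃ t : Finset ι, t.card = s.card ∧ ∑ i ∈ s, y i ≤ ∑ i ∈ t, x i) ∧
    ∑ i, x i = ∑ i, y i

/-!
The commuting `C i` are simultaneously diagonal in a unitary basis, with eigenvalues `c i k ≥ 0`.
In that basis `∑ i, C i ⊗ₖ B i` is block diagonal with blocks `∑ i, c i k • B i`, so it suffices to
compare the two sides block by block. Block `k` of the left-hand side is the diagonal matrix of
`∑ i, c i k • μ i`, which by Fan's inequality majorizes the eigenvalues of `∑ i, c i k • A i`; the
nonnegativity of `c i k` is what keeps `c i k • μ i` non-increasing. The weights `p i` are absorbed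
into the `C i`.
-/

open Unitary (conjStarAlgAut)

namespace Maj

section Fintype

variable {n κ : Type*} [Fintype n] [Fintype κ]

theorem trans {x y z : n → ℝ} (hxy : Maj x y) (hyz : Maj y z) : Maj x z := by
  refine ⟨fun s ↦ ?_, hxy.2.trans hyz.2⟩
  obtain ⟨t, ht, hst⟩ := hyz.1 s
  obtain ⟨u, hu, htu⟩ := hxy.1 t
  exact ⟨u, hu.trans ht, hst.trans htu⟩

theorem uncurry {x y : κ → n → ℝ} (h : ∀ k, Maj (x k) (y k)) :
    Maj (Function.uncurry x) (Function.uncurry y) := by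
  classical
  have sum_fibers (s : Finset (κ × n)) (f : κ × n → ℝ) :
      ∑ q ∈ s, f q = ∑ k, ∑ j with (k, j) ∈ s, f (k, j) :=
    Finset.sum_finset_product s _ _ (by simp)
  have card_fibers (s : Finset (κ × n)) : s.card = ∑ k, ({j | (k, j) ∈ s} : Finset n).card := by
    simpa only [Finset.card_eq_sum_ones] using
      Finset.sum_finset_product s Finset.univ (fun k ↦ {j | (k, j) ∈ s}) (by simp)
  refine ⟨fun s ↦ ?_, ?_⟩
  · choose t ht hst using fun k ↦ (h k).1 {j | (k, j) ∈ s}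
    refine ⟨({q | q.2 ∈ t q.1} : Finset (κ × n)), ?_, ?_⟩
    · simp only [card_fibers, Finset.mem_filter_univ,
        Finset.filter_univ_mem, ht]
    · simpa only [sum_fibers, Finset.mem_filter_univ, Finset.filter_univ_mem,
        Function.uncurry_apply_pair] using Finset.sum_le_sum fun k _ ↦ hst k
  · simp only [Fintype.sum_prod_type, Function.uncurry_apply_pair, (h _).2]

/-- By Birkhoff's theorem, a sum of entries of `D *ᵥ x` is a convex combination of the sums of the
same entries of permutations of `x`. -/
theorem mulVec_of_mem_doublyStochastic [DecidableEq n] {D : Matrix n n ℝ}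
    (hD : D ∈ doublyStochastic ℝ n) (x : n → ℝ) : Maj x (D *ᵥ x) := by
  refine ⟨fun s ↦ ?_, ?_⟩
  · let f : Matrix n n ℝ →ₗ[ℝ] ℝ := ∑ i ∈ s, LinearMap.proj i ∘ₗ (mulVecBilin ℝ ℝ).flip x
    have hf (M : Matrix n n ℝ) : f M = ∑ i ∈ s, (M *ᵥ x) i := by simp [f]
    rw [← SetLike.mem_coe, doublyStochastic_eq_convexHull_permMatrix] at hD
    obtain ⟨_, ⟨σ, rfl⟩, hσ⟩ :=
      (f.convexOn convex_univ).exists_ge_of_mem_convexHull (Set.subset_univ _) hD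
    refine ⟨s.map σ.toEmbedding, s.card_map _, ?_⟩
    simpa [hf, permMatrix_mulVec] using hσ
  · simp only [← dotProduct_one, dotProduct_comm _ (1 : n → ℝ), dotProduct_mulVec,
      one_vecMul_of_mem_doublyStochastic hD]

end Fintype

end Maj

section LinearOrder

variable {n : Type*} [LinearOrder n]

theorem sum_le_sum_of_antitone_of_isLowerSet {x : n → ℝ} (hx : Antitone x) {s t : Finset n}
    (ht : IsLowerSet (t : Set n)) (hst : s.card = t.card) :
    ∑ i ∈ s, x i ≤ ∑ i ∈ t, x i := by
  have le_of_mem {i j} (hi : i ∈ s \ t) (hj : j ∈ t \ s) : x i ≤ x j :=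
    hx <| le_of_not_ge fun hij ↦ (Finset.mem_sdiff.1 hi).2 (ht hij (Finset.mem_sdiff.1 hj).1)
  have hcard : (s \ t).card = (t \ s).card := Finset.card_sdiff_comm hst
  rw [← Finset.sum_sdiff_le_sum_sdiff]
  obtain hts | hts := (t \ s).eq_empty_or_nonempty
  · rw [hts, Finset.card_empty, Finset.card_eq_zero] at hcard
    rw [hts, hcard]
  · obtain ⟨k, hk, hmin⟩ := (t \ s).exists_min_image x hts
    calc ∑ i ∈ s \ t, x i
      _ ≤ (s \ t).card • x k := Finset.sum_le_card_nsmul _ _ _ fun i hi ↦ le_of_mem hi hk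
      _ = (t \ s).card • x k := by rw [hcard]
      _ ≤ ∑ i ∈ t \ s, x i := Finset.card_nsmul_le_sum _ _ _ hmin

theorem exists_isLowerSet_card_eq [Fintype n] {k : ℕ} (hk : k ≤ Fintype.card n) :
    ∃ t : Finset n, IsLowerSet (t : Set n) ∧ t.card = k := by
  let e : Fin (Fintype.card n) ≃o n := Fintype.orderIsoFinOfCardEq n rfl
  refine ⟨({i | (i : ℕ) < k} : Finset (Fin _)).map e.toEquiv.toEmbedding, ?_, ?_⟩
  · intro i j hji hi
    simp only [Finset.coe_map, Equiv.coe_toEmbedding, Set.mem_image_equiv, Finset.coe_filter,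
      Finset.mem_univ, true_and, Set.mem_ofPred_eq] at hi ⊢
    exact (Fin.le_def.1 (e.symm.monotone hji)).trans_lt hi
  · simp [Fin.card_filter_val_lt, hk]

variable [Fintype n]

theorem Maj.sum {ι : Type*} {x y : ι → n → ℝ} (s : Finset ι) (hx : ∀ i, Antitone (x i))
    (h : ∀ i, Maj (x i) (y i)) : Maj (∑ i ∈ s, x i) (∑ i ∈ s, y i) := by
  refine ⟨fun u ↦ ?_, ?_⟩
  · obtain ⟨t, ht, htu⟩ := exists_isLowerSet_card_eq u.card_le_univ
    refine ⟨t, htu, ?_⟩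
    simp only [Finset.sum_apply]
    rw [Finset.sum_comm, Finset.sum_comm (s := t)]
    refine Finset.sum_le_sum fun i _ ↦ ?_
    obtain ⟨v, hv, huv⟩ := (h i).1 u
    exact huv.trans (sum_le_sum_of_antitone_of_isLowerSet (hx i) ht (hv.trans htu.symm))
  · simp only [Finset.sum_apply]
    rw [Finset.sum_comm, Finset.sum_comm (s := Finset.univ)]
    exact Finset.sum_congr rfl fun i _ ↦ (h i).2

end LinearOrder

open Module in
theorem exists_orthonormalBasis_forall_apply_eq_smul {𝕜 E n ι : Type*} [RCLike 𝕜]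
    [NormedAddCommGroup E] [InnerProductSpace 𝕜 E] [FiniteDimensional 𝕜 E] [Fintype n]
    {T : ι → E →ₗ[𝕜] E} (hT : ∀ i, (T i).IsSymmetric)
    (hcomm : Pairwise (Function.onFun Commute T))
    (hn : finrank 𝕜 E = Fintype.card n) :
    ∃ (b : OrthonormalBasis n 𝕜 E) (c : ι → n → ℝ), ∀ i k, T i (b k) = (c i k : 𝕜) • b k := by
  classical
  have hV₀ := LinearMap.IsSymmetric.directSum_isInternal_of_pairwise_commute hT hcomm
  have hV := DirectSum.isInternal_ne_bot_iff.2 hV₀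
  have hV' := (LinearMap.IsSymmetric.orthogonalFamily_iInf_eigenspaces hT).comp
    (Subtype.val_injective (p := fun χ ↦ ⨅ i, End.eigenspace (T i) (χ i) ≠ ⊥))
  have : Fintype {χ : ι → 𝕜 // ⨅ i, End.eigenspace (T i) (χ i) ≠ ⊥} :=
    hV₀.submodule_iSupIndep.fintypeNeBotOfFiniteDimensional
  let b := (hV.subordinateOrthonormalBasis hn hV').reindex (Fintype.equivFin n).symm
  have hb (k : n) : ∃ χ : ι → 𝕜, ∀ i, T i (b k) = χ i • b k := by
    have hk := hV.subordinateOrthonormalBasis_subordinate hn (Fintype.equivFin n k) hV'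
    rw [Submodule.mem_iInf] at hk
    exact ⟨_, fun i ↦ by simpa [b] using End.mem_eigenspace_iff.1 (hk i)⟩
  choose χ hχ using hb
  refine ⟨b, fun i k ↦ RCLike.re (χ k i), fun i k ↦ ?_⟩
  have hχ_eigenvalue : End.HasEigenvalue (T i) (χ k i) :=
    End.hasEigenvalue_of_hasEigenvector
      ⟨End.mem_eigenspace_iff.2 (hχ k i), b.orthonormal.ne_zero k⟩
  rw [RCLike.conj_eq_iff_re.1 ((hT i).conj_eigenvalue_eq_self hχ_eigenvalue), hχ]

section Spectral

variable {𝕜 n m ι : Type*} [RCLike 𝕜] [Fintype n] [DecidableEq n] [Fintype m] [DecidableEq m]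

theorem norm_sq_mem_doublyStochastic (U : unitaryGroup n 𝕜) :
    of (fun i j ↦ ‖(U : Matrix n n 𝕜) i j‖ ^ 2) ∈ doublyStochastic ℝ n := by
  refine mem_doublyStochastic_iff_sum.2 ⟨fun _ _ ↦ sq_nonneg _, fun i ↦ ?_, fun j ↦ ?_⟩
  · have hU : (U : Matrix n n 𝕜) * star (U : Matrix n n 𝕜) = 1 := Unitary.mul_star_self_of_mem U.2
    have h := congrFun₂ hU i i
    simp only [mul_apply, star_apply, RCLike.star_def, RCLike.mul_conj, one_apply_eq] at h
    exact_mod_cast h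
  · have hU : star (U : Matrix n n 𝕜) * (U : Matrix n n 𝕜) = 1 := Unitary.star_mul_self_of_mem U.2
    have h := congrFun₂ hU j j
    simp only [mul_apply, star_apply, RCLike.star_def, RCLike.conj_mul, one_apply_eq] at h
    exact_mod_cast h

/-- `x` lists the eigenvalues of the Hermitian matrix `M` with multiplicity, in some order; this
is encoded as unitary diagonalizability of `M` with diagonal `x`. -/
def IsEigenvalueVector (M : Matrix n n 𝕜) (x : n → ℝ) : Prop :=
  ∃ U : unitaryGroup n 𝕜, M = conjStarAlgAut 𝕜 _ U (diagonal (RCLike.ofReal ∘ x))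

theorem isEigenvalueVector_eigenvalues {M : Matrix n n 𝕜} (hM : M.IsHermitian) :
    IsEigenvalueVector M hM.eigenvalues :=
  ⟨hM.eigenvectorUnitary, hM.spectral_theorem⟩

theorem isEigenvalueVector_diagonal (x : n → ℝ) :
    IsEigenvalueVector (diagonal (RCLike.ofReal ∘ x) : Matrix n n 𝕜) x :=
  ⟨1, by simp⟩

theorem isEigenvalueVector_blockDiagonal {M : m → Matrix n n 𝕜} {x : m → n → ℝ}
    (h : ∀ k, IsEigenvalueVector (M k) (x k)) :
    IsEigenvalueVector (blockDiagonal M) fun q ↦ x q.2 q.1 := by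
  choose U hU using h
  have hW : blockDiagonal (fun k ↦ (U k : Matrix n n 𝕜)) ∈ unitaryGroup (n × m) 𝕜 := by
    rw [mem_unitaryGroup_iff, star_eq_conjTranspose, blockDiagonal_conjTranspose,
      ← blockDiagonal_mul, ← blockDiagonal_one]
    exact congrArg _ (funext fun k ↦ Unitary.mul_star_self_of_mem (U k).2)
  have hx : diagonal (RCLike.ofReal ∘ fun q : n × m ↦ x q.2 q.1) =
      blockDiagonal fun k ↦ (diagonal (RCLike.ofReal ∘ x k) : Matrix n n 𝕜) :=
    (blockDiagonal_diagonal fun k j ↦ (x k j : 𝕜)).symm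
  refine ⟨⟨_, hW⟩, ?_⟩
  rw [funext hU, hx]
  simp only [Unitary.conjStarAlgAut_apply, star_eq_conjTranspose, blockDiagonal_conjTranspose,
    ← blockDiagonal_mul]

namespace IsEigenvalueVector

variable {M : Matrix n n 𝕜} {x y : n → ℝ}

theorem conj_unitary (h : IsEigenvalueVector M x) (U : unitaryGroup n 𝕜) :
    IsEigenvalueVector (conjStarAlgAut 𝕜 _ U M) x := by
  obtain ⟨V, rfl⟩ := h
  exact ⟨U * V, (Unitary.conjStarAlgAut_mul_apply ..).symm⟩

theorem smul (h : IsEigenvalueVector M x) (a : ℝ) :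
    IsEigenvalueVector ((a : 𝕜) • M) (a • x) := by
  obtain ⟨U, rfl⟩ := h
  refine ⟨U, ?_⟩
  rw [← map_smul, ← diagonal_smul]
  congr 2
  ext j
  simp

theorem submatrix (h : IsEigenvalueVector M x) (f e : m ≃ n) :
    IsEigenvalueVector (M.submatrix f f) (x ∘ e) := by
  obtain ⟨U, rfl⟩ := h
  have hW : (U : Matrix n n 𝕜).submatrix f e ∈ unitaryGroup m 𝕜 := by
    rw [mem_unitaryGroup_iff, star_eq_conjTranspose, conjTranspose_submatrix,
      submatrix_mul_equiv, ← star_eq_conjTranspose, Unitary.mul_star_self_of_mem U.2,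
      submatrix_one_equiv]
  refine ⟨⟨_, hW⟩, ?_⟩
  rw [Unitary.conjStarAlgAut_apply, Unitary.conjStarAlgAut_apply, ← Function.comp_assoc,
    ← submatrix_diagonal_equiv]
  simp only [star_eq_conjTranspose, conjTranspose_submatrix, submatrix_mul_equiv]

theorem isHermitian (h : IsEigenvalueVector M x) : M.IsHermitian := by
  obtain ⟨U, rfl⟩ := h
  have hD : (diagonal (RCLike.ofReal ∘ x) : Matrix n n 𝕜).IsHermitian :=
    isHermitian_diagonal_iff.2 fun j ↦ RCLike.conj_ofReal (x j)
  exact hD.isSelfAdjoint.map (conjStarAlgAut 𝕜 _ U)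

theorem nonneg (h : IsEigenvalueVector M x) (hM : M.PosSemidef) : 0 ≤ x := by
  obtain ⟨U, rfl⟩ := h
  have hD : (diagonal (RCLike.ofReal ∘ x) : Matrix n n 𝕜).PosSemidef := by
    rwa [Unitary.conjStarAlgAut_apply,
      Matrix.IsUnit.posSemidef_star_right_conjugate_iff Unitary.isUnit_coe] at hM
  exact fun j ↦ RCLike.ofReal_nonneg.1 (posSemidef_diagonal_iff.1 hD j)

/-- Schur: with `U` diagonalizing `M`, the diagonal of `M` is `D *ᵥ x`, where `D i j = ‖U i j‖ ^ 2`
is doubly stochastic. -/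
theorem maj_diag (h : IsEigenvalueVector M x) : Maj x fun j ↦ RCLike.re (M j j) := by
  obtain ⟨U, rfl⟩ := h
  convert Maj.mulVec_of_mem_doublyStochastic (norm_sq_mem_doublyStochastic U) x using 2 with j
  have hterm (k : n) : (U : Matrix n n 𝕜) j k * x k * star ((U : Matrix n n 𝕜) j k) =
      ((‖(U : Matrix n n 𝕜) j k‖ ^ 2 * x k : ℝ) : 𝕜) := by
    rw [mul_right_comm, RCLike.star_def, RCLike.mul_conj]
    norm_cast
  simp only [Unitary.conjStarAlgAut_apply, mul_apply (N := star _), mul_diagonal, star_apply,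
    Function.comp_apply, hterm, map_sum, RCLike.ofReal_re, mulVec_eq_sum]
  simp [mul_comm]

theorem maj (hx : IsEigenvalueVector M x) (hy : IsEigenvalueVector M y) : Maj x y := by
  obtain ⟨U, rfl⟩ := hy
  have h := (hx.conj_unitary (star U)).maj_diag
  rw [← Unitary.conjStarAlgAut_mul_apply, Unitary.star_mul_self] at h
  simpa using h

end IsEigenvalueVector

/-- Fan: in an eigenbasis of the sum, each `A i` has a diagonal majorized by `μ i`. -/
theorem maj_sum_of_isEigenvalueVector {n : Type*} [Fintype n] [LinearOrder n]
    {A : ι → Matrix n n 𝕜} {μ : ι → n → ℝ} {y : n → ℝ} (s : Finset ι)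
    (hμ : ∀ i, Antitone (μ i)) (hA : ∀ i, IsEigenvalueVector (A i) (μ i))
    (hy : IsEigenvalueVector (∑ i ∈ s, A i) y) : Maj (∑ i ∈ s, μ i) y := by
  obtain ⟨U, hU⟩ := hy
  have hsum : ∑ i ∈ s, conjStarAlgAut 𝕜 _ (star U) (A i) = diagonal (RCLike.ofReal ∘ y) := by
    rw [← map_sum, hU, ← Unitary.conjStarAlgAut_mul_apply, Unitary.star_mul_self, map_one,
      StarAlgEquiv.one_apply]
  have hdiag : y = ∑ i ∈ s, fun j ↦ RCLike.re (conjStarAlgAut 𝕜 _ (star U) (A i) j j) := by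
    ext j
    simpa [Matrix.sum_apply, -Unitary.conjStarAlgAut_apply] using
      (congrArg RCLike.re (congrFun₂ hsum j j)).symm
  rw [hdiag]
  exact Maj.sum s hμ fun i ↦ ((hA i).conj_unitary (star U)).maj_diag

theorem exists_conjStarAlgAut_diagonal_of_commute {C : ι → Matrix n n 𝕜}
    (hC : ∀ i, (C i).IsHermitian) (hcomm : Pairwise (Function.onFun Commute C)) :
    ∃ (U : unitaryGroup n 𝕜) (c : ι → n → ℝ),
      ∀ i, C i = conjStarAlgAut 𝕜 _ U (diagonal (RCLike.ofReal ∘ c i)) := by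
  obtain ⟨b, c, hb⟩ := exists_orthonormalBasis_forall_apply_eq_smul
    (fun i ↦ isSymmetric_toEuclideanLin_iff.2 (hC i))
    (hcomm.mono fun i j h ↦ h.map (toLpLinAlgEquiv 2)) finrank_euclideanSpace
  let U : unitaryGroup n 𝕜 := ⟨(EuclideanSpace.basisFun n 𝕜).toBasis.toMatrix b.toBasis,
    (EuclideanSpace.basisFun n 𝕜).toMatrix_orthonormalBasis_mem_unitary b⟩
  refine ⟨U, c, fun i ↦ ?_⟩
  have hCU : C i * (U : Matrix n n 𝕜) = (U : Matrix n n 𝕜) * diagonal (RCLike.ofReal ∘ c i) := by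
    ext r k
    have hbk : (C i *ᵥ b k) r = c i k * b k r := congrArg (· r) (hb i k)
    rw [mul_diagonal, Function.comp_apply, mul_comm]
    exact hbk
  rw [Unitary.conjStarAlgAut_apply, ← hCU, Matrix.mul_assoc, Unitary.mul_star_self_of_mem U.2,
    Matrix.mul_one]

theorem conjStarAlgAut_kronecker_one (U : unitaryGroup n 𝕜) (C : Matrix n n 𝕜) (B : Matrix m m 𝕜) :
    conjStarAlgAut 𝕜 _ ⟨(U : Matrix n n 𝕜) ⊗ₖ (1 : Matrix m m 𝕜),
      kronecker_mem_unitary U.2 (one_mem _)⟩ (C ⊗ₖ B) = conjStarAlgAut 𝕜 _ U C ⊗ₖ B := by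
  simp only [Unitary.conjStarAlgAut_apply, star_eq_conjTranspose, conjTranspose_kronecker,
    ← mul_kronecker_mul, conjTranspose_one, one_mul, mul_one]

theorem isEigenvalueVector_sum_diagonal_kronecker [Fintype ι] {c : ι → n → ℝ}
    {B : ι → Matrix m m 𝕜} {y : n → m → ℝ}
    (h : ∀ k, IsEigenvalueVector (∑ i, (c i k : 𝕜) • B i) (y k)) :
    IsEigenvalueVector (∑ i, diagonal (RCLike.ofReal ∘ c i) ⊗ₖ B i) (Function.uncurry y) := by
  convert (isEigenvalueVector_blockDiagonal h).submatrix (.prodComm n m) (.prodComm n m) using 1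
  · ext ⟨k, i⟩ ⟨l, j⟩
    by_cases hkl : k = l <;>
      simp [Matrix.sum_apply, blockDiagonal_apply, hkl, RCLike.real_smul_eq_coe_mul]
  · rfl

end Spectral

theorem maj_sum_kronecker {𝕜 n m ι : Type*} [RCLike 𝕜] [Fintype n] [DecidableEq n] [Fintype m]
    [LinearOrder m] [Fintype ι] {C : ι → Matrix n n 𝕜} {A : ι → Matrix m m 𝕜} {μ : ι → m → ℝ}
    {x y : n × m → ℝ} (hC : ∀ i, (C i).PosSemidef)
    (hcomm : Pairwise (Function.onFun Commute C)) (hμ : ∀ i, Antitone (μ i))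
    (hA : ∀ i, IsEigenvalueVector (A i) (μ i))
    (hx : IsEigenvalueVector (∑ i, C i ⊗ₖ diagonal (RCLike.ofReal ∘ μ i)) x)
    (hy : IsEigenvalueVector (∑ i, C i ⊗ₖ A i) y) : Maj x y := by
  obtain ⟨U, c, hCU⟩ := exists_conjStarAlgAut_diagonal_of_commute (fun i ↦ (hC i).1) hcomm
  have hc (i : ι) : 0 ≤ c i := IsEigenvalueVector.nonneg ⟨U, hCU i⟩ (hC i)
  have eigenvalues_of_blocks {B : ι → Matrix m m 𝕜} {z : n → m → ℝ}
      (hB : ∀ k, IsEigenvalueVector (∑ i, (c i k : 𝕜) • B i) (z k)) :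
      IsEigenvalueVector (∑ i, C i ⊗ₖ B i) (Function.uncurry z) := by
    simp only [hCU, ← conjStarAlgAut_kronecker_one, ← map_sum]
    exact (isEigenvalueVector_sum_diagonal_kronecker hB).conj_unitary _
  have eigenvalues_diagonal (k : n) : IsEigenvalueVector
      (∑ i, (c i k : 𝕜) • (diagonal (RCLike.ofReal ∘ μ i) : Matrix m m 𝕜))
      (∑ i, c i k • μ i) := by
    convert isEigenvalueVector_diagonal (𝕜 := 𝕜) (∑ i, c i k • μ i)
    ext j l
    by_cases hjl : j = l <;> simp [Matrix.sum_apply, hjl]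
  have isHermitian_block (k : n) : (∑ i, (c i k : 𝕜) • A i).IsHermitian :=
    isSelfAdjoint_sum _ fun i _ ↦ ((hA i).smul (c i k)).isHermitian.isSelfAdjoint
  have maj_block (k : n) : Maj (∑ i, c i k • μ i) (isHermitian_block k).eigenvalues :=
    maj_sum_of_isEigenvalueVector _ (fun i ↦ (hμ i).const_smul (hc i k))
      (fun i ↦ (hA i).smul (c i k)) (isEigenvalueVector_eigenvalues _)
  have hx_blocks := eigenvalues_of_blocks eigenvalues_diagonal
  have hy_blocks := eigenvalues_of_blocks fun k ↦
    isEigenvalueVector_eigenvalues (isHermitian_block k)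
  exact (hx.maj hx_blocks).trans ((Maj.uncurry maj_block).trans (hy_blocks.maj hy))

theorem stmt4_general {𝕜 n m ι : Type*} [RCLike 𝕜] [Fintype n] [DecidableEq n] [Fintype m]
    [LinearOrder m] [Fintype ι] (C : ι → Matrix n n 𝕜) (A : ι → Matrix m m 𝕜)
    (hC : ∀ i, (C i).PosSemidef) (hcomm : ∀ i j, C i * C j = C j * C i)
    (hA : ∀ i, (A i).IsHermitian) (μ : ι → m → ℝ) (hord : ∀ i, Antitone (μ i))
    (hperm : ∀ i, ∃ e : Equiv.Perm m, μ i = (hA i).eigenvalues ∘ e)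
    (p : ι → ℝ) (hp : ∀ i, 0 ≤ p i)
    (h1 : (∑ i, (p i : 𝕜) • (C i ⊗ₖ diagonal (fun j ↦ (μ i j : 𝕜)))).IsHermitian)
    (h2 : (∑ i, (p i : 𝕜) • (C i ⊗ₖ A i)).IsHermitian) :
    Maj h1.eigenvalues h2.eigenvalues := by
  have hAμ (i : ι) : IsEigenvalueVector (A i) (μ i) := by
    obtain ⟨e, he⟩ := hperm i
    rw [he]
    exact (isEigenvalueVector_eigenvalues (hA i)).submatrix (.refl _) e
  have hx := isEigenvalueVector_eigenvalues h1
  have hy := isEigenvalueVector_eigenvalues h2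
  simp only [← smul_kronecker] at hx hy
  exact maj_sum_kronecker (fun i ↦ (hC i).smul (RCLike.ofReal_nonneg.2 (hp i)))
    (fun i j _ ↦ (Commute.smul_left (hcomm i j) _).smul_right _) hord hAμ hx hy

/-- For mutually commuting PSD `Cᵢ` and self-adjoint `Aᵢ`, and every probability
distribution `p`, `∑ pᵢ Cᵢ ⊗ Aᵢ↓ ⪰ ∑ pᵢ Cᵢ ⊗ Aᵢ`, where `Aᵢ↓` is the diagonalization of
`Aᵢ` in a fixed basis with eigenvalues `μ i` in non-increasing order. -/
theorem stmt4 {dK dH ℓ : ℕ}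
    (C : Fin ℓ → Matrix (Fin dK) (Fin dK) ℂ)
    (A : Fin ℓ → Matrix (Fin dH) (Fin dH) ℂ)
    (hC : ∀ i, (C i).PosSemidef) (hcomm : ∀ i j, C i * C j = C j * C i)
    (hA : ∀ i, (A i).IsHermitian)
    (μ : Fin ℓ → Fin dH → ℝ) (hord : ∀ i, Antitone (μ i))
    (hperm : ∀ i, ∃ e : Equiv.Perm (Fin dH), μ i = (hA i).eigenvalues ∘ e)
    (p : Fin ℓ → ℝ) (hp : ∀ i, 0 ≤ p i) (hp1 : ∑ i, p i = 1)
    (h1 : (∑ i, (↑(p i) : ℂ) •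
      (C i ⊗ₖ Matrix.diagonal (fun j => (↑(μ i j) : ℂ)))).IsHermitian)
    (h2 : (∑ i, (↑(p i) : ℂ) • (C i ⊗ₖ A i)).IsHermitian) :
    Maj h1.eigenvalues h2.eigenvalues :=
  stmt4_general C A hC hcomm hA μ hord hperm p hp h1 h2
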